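/- The Steiner triple system of order 19 on Z_19 obtained by developing the base blocks {0,1,6}, {0,2,10}, {0,3,7} modulo 19 is nonsequenceable. -/

import Mathlib

/-- `B` is (the block set of) a partial Steiner triple system on the point set `X`:
every block has 3 points and every pair of distinct points lies in at most one block. -/
def isPSTS {X : Type*} [DecidableEq X] (B : Finset (Finset X)) : Prop :=
  (∀ b ∈ B, b.card = 3) ∧
  ∀ p q : X, p ≠ q → (B.filter (fun b => p ∈ b ∧ q ∈ b)).card ≤ 1

/-- `B` is (the block set of) a Steiner triple system on the point set `X`:
every block has 3 points and every pair of distinct points lies in exactly one block. -/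
def isSTS {X : Type*} [DecidableEq X] (B : Finset (Finset X)) : Prop :=
  (∀ b ∈ B, b.card = 3) ∧
  ∀ p q : X, p ≠ q → (B.filter (fun b => p ∈ b ∧ q ∈ b)).card = 1

/-- The finset `S` can be partitioned into blocks of `B`. -/
def blocksPartition {X : Type*} [DecidableEq X] (B : Finset (Finset X)) (S : Finset X) : Prop :=
  ∃ P : Finset (Finset X), P ⊆ B ∧
    (∀ b₁ ∈ P, ∀ b₂ ∈ P, b₁ ≠ b₂ → Disjoint b₁ b₂) ∧ P.biUnion id = S

/-- `A` is an almost parallel class of `B`: a set of pairwise disjoint blocks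
covering all points of `X` except exactly one. -/
def isAPC {X : Type*} [DecidableEq X] [Fintype X] (B A : Finset (Finset X)) : Prop :=
  A ⊆ B ∧ (∀ b₁ ∈ A, ∀ b₂ ∈ A, b₁ ≠ b₂ → Disjoint b₁ b₂) ∧
    ∃ y : X, A.biUnion id = Finset.univ.erase y

/-- `B` is sequenceable: there is a sequencing of the points (a bijection from
`Fin n` to `X`) such that no proper segment can be partitioned into blocks of `B`. -/
def sequenceable {X : Type*} [DecidableEq X] [Fintype X] (B : Finset (Finset X)) : Prop :=
  ∃ f : Fin (Fintype.card X) ≃ X,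
    ∀ i j : Fin (Fintype.card X), i ≤ j →
      ¬((i : ℕ) = 0 ∧ (j : ℕ) = Fintype.card X - 1) →
      ¬ blocksPartition B ((Finset.Icc i j).image f)

/-- The blocks obtained by developing the base blocks modulo 19. -/
def dev19 : Finset (Finset (ZMod 19)) :=
  Finset.univ.biUnion fun t : ZMod 19 =>
    ({{0,1,6}, {0,2,10}, {0,3,7}} : Finset (Finset (ZMod 19))).image (fun b => b.image (· + t))

/-!
Removing the first point of a sequencing leaves a proper segment that contains all points but one.
So a system on at least two points is nonsequenceable as soon as, for each point, some almost
parallel class misses exactly that point. A system developed over a group is invariant under the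
translations, which are transitive on points, so a single almost parallel class is enough.
-/

/-- `B` is point-transitive: any point can be moved to any other by an automorphism of `B`.
As `B` is finite, a permutation of the points that maps blocks to blocks permutes the blocks, so
nothing more is required of an automorphism. -/
def isPointTransitive {X : Type*} [DecidableEq X] (B : Finset (Finset X)) : Prop :=
  ∀ x y : X, ∃ σ : Equiv.Perm X, σ x = y ∧ ∀ b ∈ B, b.image σ ∈ B

/-- The development of a set of base blocks over a finite group `G`: all right translates of all
base blocks. The set `dev19` is the case `G = ZMod 19`. -/
def development {G : Type*} [AddGroup G] [Fintype G] [DecidableEq G]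
    (baseBlocks : Finset (Finset G)) : Finset (Finset G) :=
  Finset.univ.biUnion fun t : G => baseBlocks.image fun b => b.image (· + t)

theorem blocksPartition_image {X Y : Type*} [DecidableEq X] [DecidableEq Y]
    {B : Finset (Finset X)} {C : Finset (Finset Y)} {g : X → Y} (hg : Function.Injective g)
    (hBC : ∀ b ∈ B, b.image g ∈ C) {S : Finset X} (hS : blocksPartition B S) :
    blocksPartition C (S.image g) := by
  obtain ⟨P, hPB, hdisj, rfl⟩ := hS
  refine ⟨P.image (Finset.image g), ?_, ?_, ?_⟩
  · exact Finset.image_subset_iff.2 fun b hb => hBC b (hPB hb)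
  · simp only [Finset.forall_mem_image]
    intro b₁ hb₁ b₂ hb₂ hne
    exact (Finset.disjoint_image hg).2 (hdisj b₁ hb₁ b₂ hb₂ (ne_of_apply_ne _ hne))
  · simp only [Finset.image_biUnion, Finset.biUnion_image, id]

theorem isPointTransitive.blocksPartition_univ_erase {X : Type*} [DecidableEq X] [Fintype X]
    {B : Finset (Finset X)} (hB : isPointTransitive B) {x : X}
    (hx : blocksPartition B (Finset.univ.erase x)) (y : X) :
    blocksPartition B (Finset.univ.erase y) := by
  obtain ⟨σ, rfl, hσ⟩ := hB x y
  simpa only [Finset.image_erase σ.injective, Finset.image_univ_equiv] using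
    blocksPartition_image σ.injective hσ hx

theorem isPointTransitive_development {G : Type*} [AddGroup G] [Fintype G] [DecidableEq G]
    (baseBlocks : Finset (Finset G)) : isPointTransitive (development baseBlocks) := by
  intro x y
  refine ⟨Equiv.addRight (-x + y), add_neg_cancel_left x y, ?_⟩
  simp only [development, Finset.mem_biUnion, Finset.mem_univ, true_and, Finset.mem_image]
  rintro _ ⟨t, b, hb, rfl⟩
  refine ⟨t + (-x + y), b, hb, ?_⟩
  simp only [Finset.image_image, Function.comp_def, Equiv.coe_addRight, add_assoc]

theorem fin_Icc_one_last_eq_univ_erase_zero {n : ℕ} (hn : 1 < n) :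
    Finset.Icc (⟨1, hn⟩ : Fin n) ⟨n - 1, by lia⟩ = Finset.univ.erase ⟨0, by lia⟩ := by
  ext i
  simp only [Finset.mem_Icc, Fin.le_def, Finset.mem_erase, Finset.mem_univ, ne_eq, Fin.ext_iff]
  lia

theorem not_sequenceable_of_forall_blocksPartition_univ_erase {X : Type*} [DecidableEq X]
    [Fintype X] [Nontrivial X] {B : Finset (Finset X)}
    (hB : ∀ y, blocksPartition B (Finset.univ.erase y)) : ¬ sequenceable B := by
  rintro ⟨f, hf⟩
  have hcard : 1 < Fintype.card X := Fintype.one_lt_card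
  refine hf ⟨1, hcard⟩ ⟨Fintype.card X - 1, by lia⟩ (Nat.le_sub_one_of_lt hcard) (by simp) ?_
  rw [fin_Icc_one_last_eq_univ_erase_zero hcard, Finset.image_erase f.injective,
    Finset.image_univ_equiv]
  exact hB _

theorem isPointTransitive.not_sequenceable_of_isAPC {X : Type*} [DecidableEq X] [Fintype X]
    [Nontrivial X] {B A : Finset (Finset X)} (hB : isPointTransitive B) (hA : isAPC B A) :
    ¬ sequenceable B := by
  obtain ⟨hAB, hdisj, y, hcover⟩ := hA
  exact not_sequenceable_of_forall_blocksPartition_univ_erase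
    (hB.blocksPartition_univ_erase ⟨A, hAB, hdisj, hcover⟩)

/-- An almost parallel class of `dev19` that misses the point `0`. Its blocks are the translates
of `{0,1,6}` by `2, 4, 11, 14`, of `{0,2,10}` by `16` and of `{0,3,7}` by `6`. -/
def apc19 : Finset (Finset (ZMod 19)) :=
  {{2, 3, 8}, {4, 5, 10}, {11, 12, 17}, {14, 15, 1}, {16, 18, 7}, {6, 9, 13}}

theorem isAPC_dev19_apc19 : isAPC dev19 apc19 := by
  have hsub : apc19 ⊆ dev19 := by decide +kernel
  have hdisj : ∀ b₁ ∈ apc19, ∀ b₂ ∈ apc19, b₁ ≠ b₂ → Disjoint b₁ b₂ := by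
    -- A direct `decide` would enumerate all `2 ^ 19` subsets as candidates for `b₁` and `b₂`.
    simp only [apc19, Finset.forall_mem_insert, Finset.mem_singleton, forall_eq]
    and_intros <;> decide
  have hcover : apc19.biUnion id = Finset.univ.erase 0 := by decide +kernel
  exact ⟨hsub, hdisj, 0, hcover⟩

theorem stmt6 : ¬ sequenceable dev19 := by
  have : Nontrivial (ZMod 19) := ZMod.nontrivial_iff.2 (by decide)
  have htrans : isPointTransitive dev19 := isPointTransitive_development _
  exact htrans.not_sequenceable_of_isAPC isAPC_dev19_apc19
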